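/- For every s > 0 there exists C > 0 such that the following holds. Let u : ℝ³ → ℂ be twice differentiable with u, all first-order partial derivatives ∂_j u, and all second-order partial derivatives ∂_i∂_j u in L²(ℝ³), and ‖u‖_{L²} = 1; let α : ℝ³ → ℂ satisfy ‖α‖_{h_{1+s}} < ∞; and let V be the effective pair potential (the unique real V ∈ L² whose unnormalized Fourier transform equals v). Define m_α(x) = ∫ k B₀(k) e^{ik·x} α(k) dk ∈ ℂ³, (div m_α)(x) = i ∫ |k|² B₀(k) e^{ik·x} α(k) dk, F_α(x) = 2 Re m_α(x), and (h_{u,α}u)(x) = −Δu(x) − 2i (div m_α)(x) u(x) − 2i m_α(x)·∇u(x) − 2i \overline{m_α(x)}·∇u(x) + |F_α(x)|² u(x) + (∫ V(x−y)|u(y)|² dy) u(x) − μ_{u,α} u(x), where μ_{u,α} = (1/2)∫∫ V(x−y)|u(y)|²|u(x)|² dy dx + Re∫ \overline{α(k)} f_u(k) dk + Re∫ \overline{α(k)} g_{u,α}(k) dk. Then h_{u,α}u ∈ L²(ℝ³) and ‖h_{u,α}u‖_{L²} ≤ C (‖u‖_{H²} + ‖u‖_{H¹}²)(1 + ‖α‖_{h_s}²).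 -/

import Mathlib

open MeasureTheory
open scoped ENNReal

noncomputable section

/-- The dispersion relation `ω(k) = √(1+|k|²)` of the massive scalar field. -/
def ω (k : EuclideanSpace ℝ (Fin 3)) : ℝ := Real.sqrt (1 + ‖k‖ ^ 2)

/-- The Gross dressing form factor `B₀(k) = 1/(√(ω(k))·(|k|²+ω(k)))`. -/
def B0 (k : EuclideanSpace ℝ (Fin 3)) : ℝ := 1 / (Real.sqrt (ω k) * (‖k‖ ^ 2 + ω k))

/-- `v(k) = −4/(ω(k)(|k|²+ω(k))) + 2/(|k|²+ω(k))²`. -/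
def vker (k : EuclideanSpace ℝ (Fin 3)) : ℝ :=
  -4 / (ω k * (‖k‖ ^ 2 + ω k)) + 2 / (‖k‖ ^ 2 + ω k) ^ 2

/-- The `j`-th partial derivative of `u`. -/
def pd (u : EuclideanSpace ℝ (Fin 3) → ℂ) (j : Fin 3) (x : EuclideanSpace ℝ (Fin 3)) : ℂ :=
  fderiv ℝ u x (EuclideanSpace.single j 1)

/-- The second-order partial derivative `∂_i∂_j u`. -/
def pd2 (u : EuclideanSpace ℝ (Fin 3) → ℂ) (i j : Fin 3)
    (x : EuclideanSpace ℝ (Fin 3)) : ℂ :=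
  fderiv ℝ (fun y => pd u j y) x (EuclideanSpace.single i 1)

/-- The square of the `H¹`-norm. -/
def H1sq (u : EuclideanSpace ℝ (Fin 3) → ℂ) : ℝ :=
  (∫ x, ‖u x‖ ^ 2) + ∫ x, ‖fderiv ℝ u x‖ ^ 2

/-- The `H¹`-norm of `u`. -/
def H1norm (u : EuclideanSpace ℝ (Fin 3) → ℂ) : ℝ := Real.sqrt (H1sq u)

/-- The `H²`-norm of `u`. -/
def H2norm (u : EuclideanSpace ℝ (Fin 3) → ℂ) : ℝ :=
  Real.sqrt (H1sq u + ∑ i : Fin 3, ∑ j : Fin 3, ∫ x, ‖pd2 u i j x‖ ^ 2)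

/-- The weighted norm `‖α‖_{h_s} = (∫ ω(k)^{2s}|α(k)|² dk)^{1/2}`. -/
def hsNorm (s : ℝ) (α : EuclideanSpace ℝ (Fin 3) → ℂ) : ℝ :=
  Real.sqrt (∫ k, ω k ^ (2 * s) * ‖α k‖ ^ 2)

/-- The `j`-th component of `m_α(x) = ∫ k B₀(k) e^{ik·x} α(k) dk ∈ ℂ³`. -/
def mα (α : EuclideanSpace ℝ (Fin 3) → ℂ) (j : Fin 3) (x : EuclideanSpace ℝ (Fin 3)) : ℂ :=
  ∫ k, ((k j * B0 k : ℝ) : ℂ) * Complex.exp (Complex.I * ((inner ℝ k x : ℝ) : ℂ)) * α k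

/-- `(div m_α)(x) = i ∫ |k|² B₀(k) e^{ik·x} α(k) dk`. -/
def divmα (α : EuclideanSpace ℝ (Fin 3) → ℂ) (x : EuclideanSpace ℝ (Fin 3)) : ℂ :=
  Complex.I * ∫ k, ((‖k‖ ^ 2 * B0 k : ℝ) : ℂ) *
    Complex.exp (Complex.I * ((inner ℝ k x : ℝ) : ℂ)) * α k

/-- `F_α(x) = 2 Re m_α(x)`, componentwise. -/
def Fα (α : EuclideanSpace ℝ (Fin 3) → ℂ) (j : Fin 3) (x : EuclideanSpace ℝ (Fin 3)) : ℝ :=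
  2 * (mα α j x).re

/-- `f_u(k) = 2 k B₀(k) · ∫ e^{−ik·x} \bar u(x)(−i∇u(x)) dx`. -/
def fu (u : EuclideanSpace ℝ (Fin 3) → ℂ) (k : EuclideanSpace ℝ (Fin 3)) : ℂ :=
  ((2 * B0 k : ℝ) : ℂ) * ∑ j : Fin 3, ((k j : ℝ) : ℂ) *
    ∫ x, Complex.exp (-(Complex.I * ((inner ℝ k x : ℝ) : ℂ))) *
      (starRingEnd ℂ) (u x) * (-Complex.I * pd u j x)

/-- `g_{u,α}(k) = 2 k B₀(k) · ∫ e^{−ik·x} F_α(x) |u(x)|² dx`. -/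
def gualpha (u α : EuclideanSpace ℝ (Fin 3) → ℂ) (k : EuclideanSpace ℝ (Fin 3)) : ℂ :=
  ((2 * B0 k : ℝ) : ℂ) * ∑ j : Fin 3, ((k j : ℝ) : ℂ) *
    ∫ x, Complex.exp (-(Complex.I * ((inner ℝ k x : ℝ) : ℂ))) *
      ((Fα α j x : ℝ) : ℂ) * ((‖u x‖ ^ 2 : ℝ) : ℂ)

/-- The mean-field energy shift
`μ_{u,α} = ½∬ V(x−y)|u(y)|²|u(x)|² + Re⟨α, f_u⟩ + Re⟨α, g_{u,α}⟩`. -/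
def μshift (V : EuclideanSpace ℝ (Fin 3) → ℝ) (u α : EuclideanSpace ℝ (Fin 3) → ℂ) : ℝ :=
  (1 / 2) * (∫ x, ∫ y, V (x - y) * ‖u y‖ ^ 2 * ‖u x‖ ^ 2) +
    (∫ k, (starRingEnd ℂ) (α k) * fu u k).re +
    (∫ k, (starRingEnd ℂ) (α k) * gualpha u α k).re

/-- The dressed mean-field Hamiltonian `h_{u,α} = −Δ + A_α + F_α² + V∗|u|² − μ_{u,α}`
applied to `u`. -/
def hMF (V : EuclideanSpace ℝ (Fin 3) → ℝ) (u α : EuclideanSpace ℝ (Fin 3) → ℂ)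
    (x : EuclideanSpace ℝ (Fin 3)) : ℂ :=
  -(∑ j : Fin 3, pd2 u j j x)
    - 2 * Complex.I * divmα α x * u x
    - 2 * Complex.I * ∑ j : Fin 3, mα α j x * pd u j x
    - 2 * Complex.I * ∑ j : Fin 3, (starRingEnd ℂ) (mα α j x) * pd u j x
    + (((∑ j : Fin 3, Fα α j x ^ 2 : ℝ)) : ℂ) * u x
    + (((∫ y, V (x - y) * ‖u y‖ ^ 2 : ℝ)) : ℂ) * u x
    - ((μshift V u α : ℝ) : ℂ) * u x

/-!
With `N = ‖u‖_{H²} ≥ 1`, `a = ‖α‖_{h_s}`, and since `m_α + \overline{m_α} = F_α` is real,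
`h_{u,α}u = -Δu - 2i (div m_α) u - 2i F_α·∇u + (F_α² + V ∗ |u|² - μ_{u,α}) u`, where each term is
`O(N (1 + a²))` in `L²`. As `|k| B₀ ≤ ω^{-3/2}` and `ω^{-3/2-s} ∈ L²`, Cauchy–Schwarz gives
`‖m_α‖_∞ ≲ a`. As only `|k|² B₀ ≤ ω^{-1/2}`, the divergence is controlled by Plancherel instead,
`‖div m_α‖_{L²} ≲ a`, and is paired with the Sobolev embedding `‖u‖_∞ ≲ N`, which also gives
`‖V ∗ |u|²‖_∞ ≤ ‖V‖_{L²} ‖u‖_∞ ‖u‖_{L²}`. In `μ_{u,α}`, both `f_u` and `g_{u,α}` are `ω^{-3/2}`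
times a bounded function, so their pairings with `α` cost another factor `a`. Finally, Plancherel
turns the defining property of `V` into `‖V‖_{L²} = (2π)^{-3/2} ‖v‖_{L²}`.
-/

section SquareIntegrable

variable {X F G : Type*} [MeasurableSpace X] {μ : Measure X}
  [NormedAddCommGroup F] [NormedAddCommGroup G] {f : X → F} {g : X → G}

lemma lpNorm_two_eq_sqrt_integral (hf : AEStronglyMeasurable f μ) :
    lpNorm f 2 μ = √(∫ x, ‖f x‖ ^ 2 ∂μ) := by
  rw [lpNorm_eq_integral_norm_rpow_toReal two_ne_zero ENNReal.ofNat_ne_top hf, Real.sqrt_eq_rpow]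
  norm_num

lemma lpNorm_two_eq_one (hf : AEStronglyMeasurable f μ) (h : ∫ x, ‖f x‖ ^ 2 ∂μ = 1) :
    lpNorm f 2 μ = 1 := by
  rw [lpNorm_two_eq_sqrt_integral hf, h, Real.sqrt_one]

lemma lpNorm_le_mul_lpNorm {p : ℝ≥0∞} {c : ℝ} (hc : 0 ≤ c) (hg : MemLp g p μ)
    (h : ∀ x, ‖f x‖ ≤ c * ‖g x‖) : lpNorm f p μ ≤ c * lpNorm g p μ :=
  calc lpNorm f p μ ≤ lpNorm (c • fun x ↦ ‖g x‖) p μ := lpNorm_mono_real (hg.norm.const_mul c) h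
    _ = c * lpNorm g p μ := by
        rw [lpNorm_const_smul, lpNorm_norm hg.1, coe_nnnorm, Real.norm_of_nonneg hc]

lemma integral_norm_mul_norm_le_lpNorm (hf : MemLp f 2 μ) (hg : MemLp g 2 μ) :
    ∫ x, ‖f x‖ * ‖g x‖ ∂μ ≤ lpNorm f 2 μ * lpNorm g 2 μ := by
  have h := integral_mul_le_Lp_mul_Lq_of_nonneg (μ := μ) Real.HolderConjugate.two_two
    (f := fun x ↦ ‖f x‖) (g := fun x ↦ ‖g x‖) (.of_forall fun _ ↦ norm_nonneg _)
    (.of_forall fun _ ↦ norm_nonneg _) (by simpa using hf.norm) (by simpa using hg.norm)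
  simpa [lpNorm_two_eq_sqrt_integral, hf.1, hg.1, Real.sqrt_eq_rpow] using h

lemma norm_integral_mul_le_lpNorm {𝕜 : Type*} [RCLike 𝕜] {f g : X → 𝕜}
    (hf : MemLp f 2 μ) (hg : MemLp g 2 μ) :
    ‖∫ x, f x * g x ∂μ‖ ≤ lpNorm f 2 μ * lpNorm g 2 μ :=
  calc ‖∫ x, f x * g x ∂μ‖ ≤ ∫ x, ‖f x‖ * ‖g x‖ ∂μ := by
        simpa only [norm_mul] using norm_integral_le_integral_norm fun x ↦ f x * g x
    _ ≤ lpNorm f 2 μ * lpNorm g 2 μ := integral_norm_mul_norm_le_lpNorm hf hg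

lemma memLp_mul_and_lpNorm_mul_le {R : Type*} [NormedRing R] {a b : X → R} {p : ℝ≥0∞} {c : ℝ}
    (hc : 0 ≤ c) (ha : AEStronglyMeasurable a μ) (hac : ∀ x, ‖a x‖ ≤ c) (hb : MemLp b p μ) :
    MemLp (fun x ↦ a x * b x) p μ ∧ lpNorm (fun x ↦ a x * b x) p μ ≤ c * lpNorm b p μ := by
  have hle (x : X) : ‖a x * b x‖ ≤ c * ‖b x‖ :=
    (norm_mul_le _ _).trans (mul_le_mul_of_nonneg_right (hac x) (norm_nonneg _))
  exact ⟨hb.of_le_mul (ha.mul hb.1) (.of_forall hle), lpNorm_le_mul_lpNorm hc hb hle⟩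

lemma lpNorm_comp_measurePreserving {Y : Type*} [MeasurableSpace Y] {ν : Measure Y} {p : ℝ≥0∞}
    {T : Y → X} (hf : AEStronglyMeasurable f μ) (hT : MeasurePreserving T ν μ) :
    lpNorm (f ∘ T) p ν = lpNorm f p μ := by
  rw [← toReal_eLpNorm (hf.comp_measurePreserving hT), ← toReal_eLpNorm hf,
    eLpNorm_comp_measurePreserving hf hT]

end SquareIntegrable

section Fourier

open FourierTransform Real
open scoped ContDiff

variable {E : Type*} [NormedAddCommGroup E] [InnerProductSpace ℝ E] [FiniteDimensional ℝ E]
  [MeasurableSpace E] [BorelSpace E]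

lemma ae_eq_of_integral_schwartz_smul_eq {F : Type*} [NormedAddCommGroup F] [NormedSpace ℂ F]
    [CompleteSpace F] {f g : E → F} (hf : LocallyIntegrable f) (hg : LocallyIntegrable g)
    (h : ∀ φ : SchwartzMap E ℂ, ∫ x, φ x • f x = ∫ x, φ x • g x) : f =ᵐ[volume] g := by
  refine ae_eq_of_integral_contDiff_smul_eq hf hg fun φ hφ hc ↦ ?_
  have hsmooth : ContDiff ℝ ∞ fun x ↦ (φ x : ℂ) := Complex.ofRealCLM.contDiff.comp hφ
  have hsupp : HasCompactSupport fun x ↦ (φ x : ℂ) :=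
    hc.comp_left (g := fun r : ℝ ↦ (r : ℂ)) Complex.ofReal_zero
  have hψ (x : E) : hsupp.toSchwartzMap hsmooth x = φ x := rfl
  simpa only [hψ, Complex.coe_smul] using h (hsupp.toSchwartzMap hsmooth)

lemma memLp_and_lpNorm_eq_of_integral_fourier_smul_eq {F : Type*} [NormedAddCommGroup F]
    [InnerProductSpace ℂ F] [CompleteSpace F] {f g : E → F} (hf : MemLp f 2 volume)
    (hg : LocallyIntegrable g) (h : ∀ φ : SchwartzMap E ℂ, ∫ x, 𝓕 φ x • f x = ∫ x, φ x • g x) :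
    MemLp g 2 volume ∧ lpNorm g 2 volume = lpNorm f 2 volume := by
  set fL : Lp F 2 (volume : Measure E) := hf.toLp f with hfL
  have hweak (φ : SchwartzMap E ℂ) : ∫ x, φ x • (𝓕 fL : Lp F 2 volume) x = ∫ x, φ x • g x := by
    have hT := congrArg (fun T ↦ T φ) (Lp.fourier_toTemperedDistribution_eq fL)
    simp only [TemperedDistribution.fourier_apply, Lp.toTemperedDistribution_apply] at hT
    rw [← hT, ← h]
    refine integral_congr_ae ?_
    filter_upwards [hf.coeFn_toLp] with x hx
    rw [hx]
  have hae : (𝓕 fL : Lp F 2 volume) =ᵐ[volume] g :=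
    ae_eq_of_integral_schwartz_smul_eq ((Lp.memLp _).locallyIntegrable one_le_two) hg hweak
  have hgL : MemLp g 2 volume := (memLp_congr_ae hae).1 (Lp.memLp _)
  refine ⟨hgL, ?_⟩
  rw [← toReal_eLpNorm hgL.1, ← toReal_eLpNorm hf.1, ← eLpNorm_congr_ae hae, ← Lp.norm_def,
    Lp.norm_fourier_eq, hfL, Lp.norm_toLp]

lemma memLp_fourier_and_lpNorm_fourier_eq {F : Type*} [NormedAddCommGroup F]
    [InnerProductSpace ℂ F] [CompleteSpace F] {f : E → F} (hf₁ : Integrable f)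
    (hf₂ : MemLp f 2 volume) :
    MemLp (𝓕 f) 2 volume ∧ lpNorm (𝓕 f) 2 volume = lpNorm f 2 volume := by
  have hcont : Continuous (𝓕 f) :=
    VectorFourier.fourierIntegral_continuous continuous_fourierChar continuous_inner hf₁
  refine memLp_and_lpNorm_eq_of_integral_fourier_smul_eq hf₂ hcont.locallyIntegrable fun φ ↦ ?_
  rw [SchwartzMap.fourier_coe]
  have h := VectorFourier.integral_fourierIntegral_smul_eq_flip (μ := volume) (ν := volume) (e := 𝐞)
    (L := innerₗ E) continuous_fourierChar continuous_inner φ.integrable hf₁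
  rw [flip_innerₗ] at h
  exact h

lemma memLp_comp_smul {F : Type*} [NormedAddCommGroup F] {f : E → F} {p : ℝ≥0∞}
    (hf : MemLp f p volume) {c : ℝ} (hc : c ≠ 0) : MemLp (fun x ↦ f (c • x)) p volume :=
  (hf.of_measure_le_smul ENNReal.ofReal_ne_top
    (Measure.map_addHaar_smul volume hc).le).comp_of_map (by fun_prop)

lemma lpNorm_comp_smul {F : Type*} [NormedAddCommGroup F] {f : E → F} (hf : MemLp f 2 volume)
    {c : ℝ} (hc : c ≠ 0) :
    lpNorm (fun x ↦ f (c • x)) 2 volume =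
      √(|c|⁻¹ ^ Module.finrank ℝ E) * lpNorm f 2 volume := by
  rw [lpNorm_two_eq_sqrt_integral (memLp_comp_smul hf hc).1, lpNorm_two_eq_sqrt_integral hf.1,
    Measure.integral_comp_smul volume fun x ↦ ‖f x‖ ^ 2, smul_eq_mul, Real.sqrt_mul (by positivity),
    ← inv_pow, abs_pow, abs_inv]

/-- The plane-wave integral `x ↦ ∫ e^{i⟨k,x⟩} β(k) dk`, i.e. the unnormalised inverse Fourier
transform in angular frequency; Mathlib's `𝓕⁻` has `e^{2πi⟨k,x⟩}` instead. -/
def planeWaveIntegral (β : E → ℂ) (x : E) : ℂ :=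
  ∫ k, Complex.exp (Complex.I * ((inner ℝ k x : ℝ) : ℂ)) * β k

lemma integral_exp_neg_inner_mul (β : E → ℂ) (x : E) :
    ∫ k, Complex.exp (-(Complex.I * ((inner ℝ k x : ℝ) : ℂ))) * β k = 𝓕 β ((2 * π)⁻¹ • x) := by
  rw [Real.fourier_eq']
  congr 1 with k
  have hπ : (π : ℂ) ≠ 0 := Complex.ofReal_ne_zero.2 pi_ne_zero
  rw [smul_eq_mul, inner_smul_right]
  congr 2
  push_cast
  field_simp

lemma planeWaveIntegral_eq_fourier (β : E → ℂ) :
    planeWaveIntegral β = fun x ↦ 𝓕 β (-(2 * π)⁻¹ • x) := by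
  ext x
  simpa [planeWaveIntegral] using integral_exp_neg_inner_mul β (-x)

lemma continuous_planeWaveIntegral {β : E → ℂ} (hβ : Integrable β) :
    Continuous (planeWaveIntegral β) := by
  have hcont : Continuous (𝓕 β) :=
    VectorFourier.fourierIntegral_continuous continuous_fourierChar continuous_inner hβ
  rw [planeWaveIntegral_eq_fourier]
  fun_prop

lemma norm_planeWaveIntegral_le (β : E → ℂ) (x : E) : ‖planeWaveIntegral β x‖ ≤ ∫ k, ‖β k‖ := by
  refine (norm_integral_le_integral_norm _).trans_eq (integral_congr_ae (.of_forall fun k ↦ ?_))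
  simp

lemma memLp_planeWaveIntegral_and_lpNorm_eq {β : E → ℂ} (hβ₁ : Integrable β)
    (hβ₂ : MemLp β 2 volume) :
    MemLp (planeWaveIntegral β) 2 volume ∧ lpNorm (planeWaveIntegral β) 2 volume =
      √((2 * π) ^ Module.finrank ℝ E) * lpNorm β 2 volume := by
  obtain ⟨hmem, hnorm⟩ := memLp_fourier_and_lpNorm_fourier_eq hβ₁ hβ₂
  have hc : -(2 * π)⁻¹ ≠ 0 := neg_ne_zero.2 (by positivity)
  have h := lpNorm_comp_smul hmem hc
  rw [hnorm, abs_neg, abs_of_pos (by positivity), inv_inv] at h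
  rw [planeWaveIntegral_eq_fourier]
  exact ⟨memLp_comp_smul hmem hc, h⟩

lemma lpNorm_eq_of_integral_mul_fourier_eq {V w : E → ℂ} (hV : MemLp V 2 volume)
    (hw : LocallyIntegrable w)
    (h : ∀ φ : SchwartzMap E ℂ,
      ∫ x, V x * ∫ k, Complex.exp (-(Complex.I * ((inner ℝ k x : ℝ) : ℂ))) * φ k =
        ∫ k, w k * φ k) :
    lpNorm w 2 volume = √((2 * π) ^ Module.finrank ℝ E) * lpNorm V 2 volume := by
  set d := Module.finrank ℝ E
  have hc : 2 * π ≠ 0 := by positivity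
  have hrescaled (φ : SchwartzMap E ℂ) :
      ∫ y, 𝓕 φ y • (((2 * π) ^ d : ℝ) • V ((2 * π) • y)) = ∫ k, φ k • w k := by
    calc ∫ y, 𝓕 φ y • (((2 * π) ^ d : ℝ) • V ((2 * π) • y))
        = (2 * π) ^ d • ∫ y, V ((2 * π) • y) * 𝓕 φ ((2 * π)⁻¹ • (2 * π) • y) := by
          rw [← integral_smul]
          simp only [inv_smul_smul₀ hc, smul_eq_mul, mul_smul_comm, mul_comm (V _)]
      _ = ∫ x, V x * 𝓕 φ ((2 * π)⁻¹ • x) := by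
          rw [Measure.integral_comp_smul volume fun x ↦ V x * 𝓕 φ ((2 * π)⁻¹ • x), abs_inv,
            abs_of_pos (by positivity), smul_inv_smul₀ (by positivity)]
      _ = ∫ k, φ k • w k := by
          simp only [SchwartzMap.fourier_coe, ← integral_exp_neg_inner_mul, h, smul_eq_mul,
            mul_comm (w _)]
  have hnorm := (memLp_and_lpNorm_eq_of_integral_fourier_smul_eq
    ((memLp_comp_smul hV hc).const_smul ((2 * π) ^ d)) hw hrescaled).2
  refine hnorm.trans ((lpNorm_const_smul ((2 * π) ^ d) (fun y ↦ V ((2 * π) • y)) volume).trans ?_)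
  rw [lpNorm_comp_smul hV hc, coe_nnnorm, Real.norm_of_nonneg (by positivity),
    abs_of_pos (by positivity), inv_pow, Real.sqrt_inv, ← mul_assoc, ← div_eq_mul_inv,
    Real.div_sqrt]

end Fourier

section SobolevEmbedding

open FourierTransform Laplacian Real
open scoped ContDiff Convolution

variable {E : Type*} [NormedAddCommGroup E] [InnerProductSpace ℝ E]

variable (E) in
/-- The Fourier symbol `1/(1+|k|²)` of the resolvent `(1 - Δ/(4π²))⁻¹`; the factor `4π²` comes from
the kernel `e^{-2πi⟨k,x⟩}` of Mathlib's Fourier transform. -/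
def resolventSymbol (k : E) : ℝ := (1 + ‖k‖ ^ 2) ^ (-1 : ℝ)

lemma hasTemperateGrowth_resolventSymbol : (resolventSymbol E).HasTemperateGrowth := by
  unfold resolventSymbol
  fun_prop

variable [FiniteDimensional ℝ E] [MeasurableSpace E] [BorelSpace E]

/-- The resolvent `(1 - Δ/(4π²))⁻¹` acting on Schwartz functions. -/
def schwartzResolvent (φ : SchwartzMap E ℂ) : SchwartzMap E ℂ :=
  SchwartzMap.fourierMultiplierCLM ℂ (resolventSymbol E) φ

lemma fourier_schwartzResolvent_apply (φ : SchwartzMap E ℂ) (k : E) :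
    𝓕 (schwartzResolvent φ) k = resolventSymbol E k • 𝓕 φ k := by
  rw [schwartzResolvent, SchwartzMap.fourierMultiplierCLM_apply,
    FourierTransform.fourier_fourierInv_eq,
    SchwartzMap.smulLeftCLM_apply_apply hasTemperateGrowth_resolventSymbol]

lemma schwartzResolvent_sub_smul_laplacian (φ : SchwartzMap E ℂ) :
    schwartzResolvent φ - ((2 * π) ^ 2)⁻¹ • Δ (schwartzResolvent φ) = φ := by
  have hsq : (fun k : E ↦ ‖k‖ ^ 2).HasTemperateGrowth := by fun_prop
  have hinj : Function.Injective (𝓕 : SchwartzMap E ℂ → SchwartzMap E ℂ) :=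
    Function.LeftInverse.injective (g := 𝓕⁻) FourierTransform.fourierInv_fourier_eq
  apply hinj
  ext k
  rw [SchwartzMap.laplacian_eq_fourierMultiplierCLM, neg_smul, smul_neg, sub_neg_eq_add, smul_smul,
    inv_mul_cancel₀ (by positivity), one_smul, FourierTransform.fourier_add,
    SchwartzMap.fourierMultiplierCLM_apply, FourierTransform.fourier_fourierInv_eq, add_apply,
    SchwartzMap.smulLeftCLM_apply_apply hsq, fourier_schwartzResolvent_apply, smul_smul, ← add_smul,
    resolventSymbol, rpow_neg_one]
  have : 0 < 1 + ‖k‖ ^ 2 := by positivity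
  rw [show (1 + ‖k‖ ^ 2)⁻¹ + ‖k‖ ^ 2 * (1 + ‖k‖ ^ 2)⁻¹ = 1 by field_simp, one_smul]

lemma memLp_resolventSymbol (hE : Module.finrank ℝ E < 4) :
    MemLp (resolventSymbol E) 2 volume := by
  have hcont : Continuous (resolventSymbol E) :=
    hasTemperateGrowth_resolventSymbol.1.continuous
  rw [memLp_two_iff_integrable_sq hcont.aestronglyMeasurable]
  have hint : Integrable fun k : E ↦ (1 + ‖k‖ ^ 2) ^ (-(4 : ℝ) / 2) :=
    integrable_rpow_neg_one_add_norm_sq (by exact_mod_cast hE)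
  refine hint.congr (.of_forall fun k ↦ ?_)
  simp only [resolventSymbol]
  rw [← rpow_mul_natCast (by positivity) (-1) 2]
  norm_num

lemma lpNorm_schwartzResolvent_le (hE : Module.finrank ℝ E < 4) (φ : SchwartzMap E ℂ) :
    lpNorm (schwartzResolvent φ) 2 volume ≤
      (∫ x, ‖φ x‖) * lpNorm (resolventSymbol E) 2 volume := by
  have hplancherel := (memLp_fourier_and_lpNorm_fourier_eq (schwartzResolvent φ).integrable
    ((schwartzResolvent φ).memLp 2)).2
  rw [← hplancherel, ← SchwartzMap.fourier_coe]
  refine lpNorm_le_mul_lpNorm (by positivity) (memLp_resolventSymbol hE) fun k ↦ ?_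
  rw [fourier_schwartzResolvent_apply, norm_smul, mul_comm]
  gcongr
  simpa only [SchwartzMap.norm_toLp_one] using SchwartzMap.norm_fourier_apply_le_toLp_one φ k

lemma norm_le_of_norm_integral_mul_schwartz_le {u : E → ℂ} (hu : Continuous u) {C : ℝ}
    (h : ∀ φ : SchwartzMap E ℂ, ‖∫ x, u x * φ x‖ ≤ C * ∫ x, ‖φ x‖) (x₀ : E) : ‖u x₀‖ ≤ C := by
  let bump (n : ℕ) : ContDiffBump (0 : E) :=
    ⟨1 / ((n : ℝ) + 1) / 2, 1 / ((n : ℝ) + 1), by positivity, half_lt_self (by positivity)⟩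
  let ρ (n : ℕ) (x : E) : ℝ := (bump n).normed volume (x₀ - x)
  have hlim := (ContDiffBump.convolution_tendsto_right_of_continuous (μ := volume) (φ := bump)
    tendsto_one_div_add_atTop_nhds_zero_nat hu x₀).norm
  refine le_of_tendsto hlim (.of_forall fun n ↦ ?_)
  have hsupp : HasCompactSupport fun x ↦ (ρ n x : ℂ) :=
    (((bump n).hasCompactSupport_normed (μ := volume)).comp_homeomorph
      (Homeomorph.subLeft x₀)).comp_left (g := fun r : ℝ ↦ (r : ℂ)) Complex.ofReal_zero
  have hsmooth : ContDiff ℝ ∞ fun x ↦ (ρ n x : ℂ) :=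
    Complex.ofRealCLM.contDiff.comp ((bump n).contDiff_normed.comp (contDiff_const.sub contDiff_id))
  have hmass : ∫ x, ‖(ρ n x : ℂ)‖ = 1 := by
    simp only [ρ, Complex.norm_real, norm_of_nonneg ((bump n).nonneg_normed _)]
    rw [integral_sub_left_eq_self fun x ↦ (bump n).normed volume x, ContDiffBump.integral_normed]
  calc ‖((bump n).normed volume ⋆[ContinuousLinearMap.lsmul ℝ ℝ, volume] u) x₀‖
      = ‖∫ x, u x * (ρ n x : ℂ)‖ := by
        rw [convolution_eq_swap]
        simp only [ContinuousLinearMap.lsmul_apply, Complex.real_smul, mul_comm (u _), ρ]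
    _ ≤ C * ∫ x, ‖(ρ n x : ℂ)‖ := h (hsupp.toSchwartzMap hsmooth)
    _ = C := by rw [hmass, mul_one]

-- Duality: `∫ u φ = ∫ (1 - Δ/(4π²))u · Rφ` for the resolvent `R`, and `‖Rφ‖_{L²} ≲ ‖φ‖_{L¹}`.
lemma norm_le_lpNorm_add_lpNorm_weakLaplacian (hE : Module.finrank ℝ E < 4) {u w : E → ℂ}
    (hcont : Continuous u) (hu : MemLp u 2 volume) (hw : MemLp w 2 volume)
    (hweak : ∀ φ : SchwartzMap E ℂ, ∫ x, u x * (Δ φ) x = ∫ x, w x * φ x) (x : E) :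
    ‖u x‖ ≤ lpNorm (resolventSymbol E) 2 volume *
      (lpNorm u 2 volume + ((2 * π) ^ 2)⁻¹ * lpNorm w 2 volume) := by
  set K := lpNorm (resolventSymbol E) 2 volume
  set c := ((2 * π) ^ 2)⁻¹
  have hc : 0 ≤ c := by positivity
  refine norm_le_of_norm_integral_mul_schwartz_le hcont (fun φ ↦ ?_) x
  set ψ := schwartzResolvent φ
  have hsplit : ∫ x, u x * φ x = (∫ x, u x * ψ x) - c • ∫ x, w x * ψ x := by
    have hint : Integrable fun y ↦ u y * ψ y := hu.integrable_mul (ψ.memLp 2)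
    have hint_lap : Integrable fun y ↦ c • (u y * (Δ ψ) y) :=
      (hu.integrable_mul ((Δ ψ).memLp 2)).smul c
    rw [← hweak, ← integral_smul, ← integral_sub hint hint_lap]
    refine integral_congr_ae (.of_forall fun y ↦ ?_)
    simp only [← mul_smul_comm, ← mul_sub]
    conv_lhs => rw [← schwartzResolvent_sub_smul_laplacian φ]
    rfl
  have hψ : lpNorm ψ 2 volume ≤ (∫ x, ‖φ x‖) * K := lpNorm_schwartzResolvent_le hE φ
  calc ‖∫ x, u x * φ x‖ ≤ ‖∫ x, u x * ψ x‖ + c * ‖∫ x, w x * ψ x‖ := by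
        rw [hsplit]
        exact (norm_sub_le _ _).trans_eq (by rw [norm_smul, norm_of_nonneg hc])
    _ ≤ lpNorm u 2 volume * lpNorm ψ 2 volume + c * (lpNorm w 2 volume * lpNorm ψ 2 volume) := by
        gcongr
        · exact norm_integral_mul_le_lpNorm hu (ψ.memLp 2)
        · exact norm_integral_mul_le_lpNorm hw (ψ.memLp 2)
    _ = (lpNorm u 2 volume + c * lpNorm w 2 volume) * lpNorm ψ 2 volume := by ring
    _ ≤ (lpNorm u 2 volume + c * lpNorm w 2 volume) * ((∫ x, ‖φ x‖) * K) := by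
        gcongr
        have := lpNorm_nonneg (f := u) (p := 2) (μ := volume)
        have := lpNorm_nonneg (f := w) (p := 2) (μ := volume)
        positivity
    _ = K * (lpNorm u 2 volume + c * lpNorm w 2 volume) * ∫ x, ‖φ x‖ := by ring

lemma integral_mul_lineDeriv_eq_neg_integral_fderiv_mul {f : E → ℂ} (hf : Differentiable ℝ f)
    (v : E) (hf₂ : MemLp f 2 volume) (hdf₂ : MemLp (fun x ↦ fderiv ℝ f x v) 2 volume)
    (φ : SchwartzMap E ℂ) :
    ∫ x, f x * (LineDeriv.lineDerivOp v φ) x = -∫ x, fderiv ℝ f x v * φ x := by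
  have hφ (x : E) : (LineDeriv.lineDerivOp v φ) x = fderiv ℝ φ x v :=
    SchwartzMap.lineDerivOp_apply_eq_fderiv _ _ _
  simp only [hφ]
  refine integral_mul_fderiv_eq_neg_fderiv_mul_of_integrable (hdf₂.integrable_mul (φ.memLp 2)) ?_
    (hf₂.integrable_mul (φ.memLp 2)) (fun x _ ↦ hf x) (fun x _ ↦ φ.differentiable x)
  simp only [← hφ]
  exact hf₂.integrable_mul (SchwartzMap.memLp _ 2 volume)

end SobolevEmbedding

local notation "ℝ³" => EuclideanSpace ℝ (Fin 3)

section SecondOrderSobolev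

open Laplacian Real

variable {u : ℝ³ → ℂ}

/-- Membership in `H²(ℝ³)` for functions with pointwise derivatives: `u` is twice differentiable,
and `u`, `∇u` and all `∂ᵢ∂ⱼu` are square integrable. -/
structure IsH2 (u : ℝ³ → ℂ) : Prop where
  differentiable : Differentiable ℝ u
  differentiable_pd (j : Fin 3) : Differentiable ℝ (pd u j)
  memLp : MemLp u 2 volume
  memLp_fderiv : MemLp (fderiv ℝ u) 2 volume
  memLp_pd2 (i j : Fin 3) : MemLp (pd2 u i j) 2 volume

lemma norm_pd_le_norm_fderiv (u : ℝ³ → ℂ) (j : Fin 3) (x : ℝ³) : ‖pd u j x‖ ≤ ‖fderiv ℝ u x‖ := by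
  simpa [pd] using (fderiv ℝ u x).le_opNorm (EuclideanSpace.single j 1)

lemma memLp_pd {p : ℝ≥0∞} (h : MemLp (fderiv ℝ u) p volume) (j : Fin 3) :
    MemLp (pd u j) p volume :=
  (ContinuousLinearMap.apply ℝ ℂ (EuclideanSpace.single j (1 : ℝ))).comp_memLp' h

lemma H2norm_nonneg (u : ℝ³ → ℂ) : 0 ≤ H2norm u := Real.sqrt_nonneg _

namespace IsH2

lemma integral_mul_laplacian (hu : IsH2 u) (φ : SchwartzMap ℝ³ ℂ) :
    ∫ x, u x * (Δ φ) x = ∫ x, (∑ j, pd2 u j j x) * φ x := by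
  have hpd := memLp_pd hu.memLp_fderiv
  simp only [SchwartzMap.laplacian_eq_sum (EuclideanSpace.basisFun (Fin 3) ℝ), sum_apply,
    Finset.mul_sum, Finset.sum_mul]
  rw [integral_finsetSum, integral_finsetSum]
  · refine Finset.sum_congr rfl fun j _ ↦ ?_
    rw [EuclideanSpace.basisFun_apply, integral_mul_lineDeriv_eq_neg_integral_fderiv_mul
      hu.differentiable _ hu.memLp (hpd j)]
    have h := integral_mul_lineDeriv_eq_neg_integral_fderiv_mul (hu.differentiable_pd j) _ (hpd j)
      (hu.memLp_pd2 j j) φ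
    exact (congrArg Neg.neg h).trans (neg_neg _)
  · exact fun j _ ↦ (hu.memLp_pd2 j j).integrable_mul (φ.memLp 2)
  · exact fun j _ ↦ hu.memLp.integrable_mul (SchwartzMap.memLp _ 2 volume)

lemma lpNorm_le_H2norm (hu : IsH2 u) : lpNorm u 2 volume ≤ H2norm u := by
  rw [lpNorm_two_eq_sqrt_integral hu.memLp.1, H2norm, H1sq, add_assoc]
  exact Real.sqrt_le_sqrt (le_add_of_nonneg_right (by positivity))

lemma lpNorm_fderiv_le_H2norm (hu : IsH2 u) : lpNorm (fderiv ℝ u) 2 volume ≤ H2norm u := by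
  rw [lpNorm_two_eq_sqrt_integral hu.memLp_fderiv.1, H2norm, H1sq, add_right_comm]
  exact Real.sqrt_le_sqrt (le_add_of_nonneg_left (by positivity))

lemma lpNorm_pd2_le_H2norm (hu : IsH2 u) (i j : Fin 3) :
    lpNorm (pd2 u i j) 2 volume ≤ H2norm u := by
  rw [lpNorm_two_eq_sqrt_integral (hu.memLp_pd2 i j).1, H2norm]
  refine Real.sqrt_le_sqrt (le_add_of_nonneg_of_le (by unfold H1sq; positivity) ?_)
  calc ∫ x, ‖pd2 u i j x‖ ^ 2 ≤ ∑ j, ∫ x, ‖pd2 u i j x‖ ^ 2 :=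
        Finset.single_le_sum (f := fun j ↦ ∫ x, ‖pd2 u i j x‖ ^ 2) (fun _ _ ↦ by positivity)
          (Finset.mem_univ j)
    _ ≤ ∑ i, ∑ j, ∫ x, ‖pd2 u i j x‖ ^ 2 :=
        Finset.single_le_sum (f := fun i ↦ ∑ j, ∫ x, ‖pd2 u i j x‖ ^ 2)
          (fun _ _ ↦ by positivity) (Finset.mem_univ i)

lemma memLp_sum_pd2 (hu : IsH2 u) : MemLp (fun x ↦ ∑ j, pd2 u j j x) 2 volume :=
  memLp_finsetSum _ fun j _ ↦ hu.memLp_pd2 j j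

lemma lpNorm_sum_pd2_le (hu : IsH2 u) :
    lpNorm (fun x ↦ ∑ j, pd2 u j j x) 2 volume ≤ 3 * H2norm u :=
  calc lpNorm (fun x ↦ ∑ j, pd2 u j j x) 2 volume ≤ ∑ j, lpNorm (pd2 u j j) 2 volume := by
        simpa only [← Finset.sum_apply] using
          lpNorm_sum_le (fun j _ ↦ hu.memLp_pd2 j j) one_le_two
    _ ≤ 3 * H2norm u := by
        simpa using Finset.sum_le_card_nsmul Finset.univ (fun j ↦ lpNorm (pd2 u j j) 2 volume) _
          fun j _ ↦ hu.lpNorm_pd2_le_H2norm j j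

end IsH2

/-- The constant of the embedding `H²(ℝ³) ⊂ L^∞(ℝ³)`. -/
def sobolevConst : ℝ :=
  lpNorm (resolventSymbol ℝ³) 2 volume * (1 + ((2 * π) ^ 2)⁻¹ * 3)

lemma sobolevConst_nonneg : 0 ≤ sobolevConst :=
  mul_nonneg lpNorm_nonneg (by positivity)

lemma IsH2.norm_apply_le (hu : IsH2 u) (x : ℝ³) : ‖u x‖ ≤ sobolevConst * H2norm u :=
  calc ‖u x‖ ≤ lpNorm (resolventSymbol ℝ³) 2 volume * (lpNorm u 2 volume +
          ((2 * π) ^ 2)⁻¹ * lpNorm (fun x ↦ ∑ j, pd2 u j j x) 2 volume) :=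
        norm_le_lpNorm_add_lpNorm_weakLaplacian (by simp) hu.differentiable.continuous
          hu.memLp hu.memLp_sum_pd2 hu.integral_mul_laplacian x
    _ ≤ lpNorm (resolventSymbol ℝ³) 2 volume *
          (H2norm u + ((2 * π) ^ 2)⁻¹ * (3 * H2norm u)) := by
        have hconst := lpNorm_nonneg (f := resolventSymbol ℝ³) (p := 2) (μ := volume)
        gcongr
        exacts [hu.lpNorm_le_H2norm, hu.lpNorm_sum_pd2_le]
    _ = sobolevConst * H2norm u := by rw [sobolevConst]; ring

end SecondOrderSobolev

section FormFactor

open Real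

lemma ω_sq (k : ℝ³) : ω k ^ 2 = 1 + ‖k‖ ^ 2 := Real.sq_sqrt (by positivity)

lemma one_le_ω (k : ℝ³) : 1 ≤ ω k := Real.one_le_sqrt.2 (le_add_of_nonneg_right (by positivity))

lemma ω_pos (k : ℝ³) : 0 < ω k := one_pos.trans_le (one_le_ω k)

lemma norm_le_ω (k : ℝ³) : ‖k‖ ≤ ω k := Real.le_sqrt_of_sq_le (le_add_of_nonneg_left zero_le_one)

@[fun_prop]
lemma continuous_ω : Continuous ω := by
  unfold ω
  fun_prop

@[fun_prop]
lemma continuous_ω_rpow (γ : ℝ) : Continuous fun k ↦ ω k ^ γ :=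
  continuous_ω.rpow_const fun k ↦ .inl (ω_pos k).ne'

@[fun_prop]
lemma continuous_B0 : Continuous B0 := by
  unfold B0
  refine continuous_const.div (by fun_prop) fun k ↦ ?_
  have := ω_pos k
  positivity

lemma continuous_vker : Continuous vker := by
  unfold vker
  refine .add (continuous_const.div (by fun_prop) fun k ↦ ?_)
    (continuous_const.div (by fun_prop) fun k ↦ ?_) <;>
  · have := ω_pos k
    positivity

lemma B0_nonneg (k : ℝ³) : 0 ≤ B0 k := by
  have := ω_pos k
  unfold B0
  positivity

lemma B0_le (k : ℝ³) : B0 k ≤ ω k ^ (-(5 / 2) : ℝ) := by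
  have hω := ω_pos k
  rw [B0, rpow_neg hω.le, one_div]
  have hsplit : ω k ^ (5 / 2 : ℝ) = √(ω k) * ω k ^ 2 := by
    rw [sqrt_eq_rpow, ← rpow_natCast, ← rpow_add hω]
    norm_num
  rw [hsplit, ω_sq, add_comm 1]
  gcongr
  exact one_le_ω k

lemma abs_apply_mul_B0_le (k : ℝ³) (j : Fin 3) : |k j * B0 k| ≤ ω k ^ (-(3 / 2) : ℝ) := by
  have hω := ω_pos k
  calc |k j * B0 k| = |k j| * B0 k := by rw [abs_mul, abs_of_nonneg (B0_nonneg k)]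
    _ ≤ ω k ^ (1 : ℝ) * ω k ^ (-(5 / 2) : ℝ) := by
        rw [rpow_one]
        gcongr
        exacts [B0_nonneg k, (PiLp.norm_apply_le k j).trans (norm_le_ω k), B0_le k]
    _ = ω k ^ (-(3 / 2) : ℝ) := by
        rw [← rpow_add hω]
        norm_num

lemma norm_sq_mul_B0_le (k : ℝ³) : ‖k‖ ^ 2 * B0 k ≤ ω k ^ (-(1 / 2) : ℝ) := by
  have hω := ω_pos k
  calc ‖k‖ ^ 2 * B0 k ≤ ω k ^ (2 : ℝ) * ω k ^ (-(5 / 2) : ℝ) := by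
        rw [rpow_two]
        gcongr
        exacts [B0_nonneg k, norm_le_ω k, B0_le k]
    _ = ω k ^ (-(1 / 2) : ℝ) := by
        rw [← rpow_add hω]
        norm_num

lemma norm_B0_mul_sum_le {c : Fin 3 → ℂ} {D : ℝ} (hc : ∀ j, ‖c j‖ ≤ D) (k : ℝ³) :
    ‖((2 * B0 k : ℝ) : ℂ) * ∑ j, ((k j : ℝ) : ℂ) * c j‖ ≤ 6 * D * ω k ^ (-(3 / 2) : ℝ) := by
  have hterm (j : Fin 3) : ‖((k j * B0 k : ℝ) : ℂ) * c j‖ ≤ ω k ^ (-(3 / 2) : ℝ) * D := by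
    have := ω_pos k
    rw [norm_mul, Complex.norm_real, norm_eq_abs]
    gcongr
    exacts [abs_apply_mul_B0_le k j, hc j]
  have hfactor : ((2 * B0 k : ℝ) : ℂ) * ∑ j, ((k j : ℝ) : ℂ) * c j =
      2 * ∑ j, ((k j * B0 k : ℝ) : ℂ) * c j := by
    simp only [Finset.mul_sum]
    refine Finset.sum_congr rfl fun j _ ↦ ?_
    push_cast
    ring
  calc ‖((2 * B0 k : ℝ) : ℂ) * ∑ j, ((k j : ℝ) : ℂ) * c j‖
      = 2 * ‖∑ j, ((k j * B0 k : ℝ) : ℂ) * c j‖ := by rw [hfactor, norm_mul, Complex.norm_two]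
    _ ≤ 2 * ∑ _j : Fin 3, ω k ^ (-(3 / 2) : ℝ) * D := by
        gcongr
        exact norm_sum_le_of_le _ fun j _ ↦ hterm j
    _ = 6 * D * ω k ^ (-(3 / 2) : ℝ) := by
        simp only [Finset.sum_const, Finset.card_univ, Fintype.card_fin, nsmul_eq_mul]
        ring

end FormFactor

section WeightedSpace

open Real

variable {s t γ : ℝ} {α : ℝ³ → ℂ}

/-- Membership in the weighted space `h_t`, i.e. `ω^t α ∈ L²`. -/
def MemH (t : ℝ) (α : ℝ³ → ℂ) : Prop := MemLp (fun k ↦ ω k ^ t * ‖α k‖) 2 volume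

lemma norm_ω_rpow_mul_norm (t : ℝ) (α : ℝ³ → ℂ) (k : ℝ³) :
    ‖ω k ^ t * ‖α k‖‖ = ω k ^ t * ‖α k‖ :=
  norm_of_nonneg (mul_nonneg (rpow_nonneg (ω_pos k).le t) (norm_nonneg _))

lemma sq_ω_rpow_mul_norm (t : ℝ) (α : ℝ³ → ℂ) (k : ℝ³) :
    (ω k ^ t * ‖α k‖) ^ 2 = ω k ^ (2 * t) * ‖α k‖ ^ 2 := by
  rw [mul_pow, mul_comm 2 t, rpow_mul (ω_pos k).le, rpow_two]

lemma aestronglyMeasurable_ω_rpow_mul_norm (hα : AEStronglyMeasurable α volume) (t : ℝ) :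
    AEStronglyMeasurable (fun k ↦ ω k ^ t * ‖α k‖) volume :=
  (continuous_ω_rpow t).aestronglyMeasurable.mul hα.norm

lemma memH_of_lintegral_lt_top (hα : AEStronglyMeasurable α volume)
    (h : ∫⁻ k, ENNReal.ofReal (ω k ^ (2 * t) * ‖α k‖ ^ 2) < ⊤) : MemH t α := by
  have hm := aestronglyMeasurable_ω_rpow_mul_norm hα t
  refine (memLp_two_iff_integrable_sq hm).2 ⟨hm.pow 2, ?_⟩
  rw [hasFiniteIntegral_iff_ofReal (.of_forall fun _ ↦ by positivity)]
  simpa only [sq_ω_rpow_mul_norm] using h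

lemma MemH.mono (h : MemH t α) (hα : AEStronglyMeasurable α volume) (hs : s ≤ t) : MemH s α := by
  refine MemLp.mono h (aestronglyMeasurable_ω_rpow_mul_norm hα s) (.of_forall fun k ↦ ?_)
  rw [norm_ω_rpow_mul_norm, norm_ω_rpow_mul_norm]
  gcongr
  exact one_le_ω k

lemma lpNorm_eq_hsNorm (hα : AEStronglyMeasurable α volume) (t : ℝ) :
    lpNorm (fun k ↦ ω k ^ t * ‖α k‖) 2 volume = hsNorm t α := by
  rw [lpNorm_two_eq_sqrt_integral (aestronglyMeasurable_ω_rpow_mul_norm hα t), hsNorm]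
  simp only [norm_ω_rpow_mul_norm, sq_ω_rpow_mul_norm]

lemma hsNorm_nonneg (t : ℝ) (α : ℝ³ → ℂ) : 0 ≤ hsNorm t α := Real.sqrt_nonneg _

lemma memLp_ω_rpow (hγ : γ < -(3 / 2)) : MemLp (fun k ↦ ω k ^ γ) 2 volume := by
  rw [memLp_two_iff_integrable_sq (continuous_ω_rpow γ).aestronglyMeasurable]
  have hint : Integrable fun k : ℝ³ ↦ (1 + ‖k‖ ^ 2) ^ (-(-2 * γ) / 2) :=
    integrable_rpow_neg_one_add_norm_sq (by
      rw [finrank_euclideanSpace_fin]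
      push_cast
      linarith)
  refine hint.congr (.of_forall fun k ↦ ?_)
  simp only
  rw [← ω_sq, ← rpow_natCast, ← rpow_mul (ω_pos k).le, ← rpow_mul_natCast (ω_pos k).le]
  congr 1
  push_cast
  ring

lemma ω_rpow_mul_norm_eq_mul (γ t : ℝ) (α : ℝ³ → ℂ) (k : ℝ³) :
    ω k ^ γ * ‖α k‖ = ‖ω k ^ (γ - t)‖ * ‖ω k ^ t * ‖α k‖‖ := by
  rw [norm_ω_rpow_mul_norm, norm_of_nonneg (rpow_nonneg (ω_pos k).le _), ← mul_assoc,
    ← rpow_add (ω_pos k), sub_add_cancel]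

namespace MemH

lemma integrable_ω_rpow_mul_norm (h : MemH t α) (hγ : γ < t - 3 / 2) :
    Integrable fun k ↦ ω k ^ γ * ‖α k‖ := by
  simp only [ω_rpow_mul_norm_eq_mul γ t]
  exact (memLp_ω_rpow (by linarith)).norm.integrable_mul (MemLp.norm h)

lemma integral_ω_rpow_mul_norm_le (h : MemH t α) (hα : AEStronglyMeasurable α volume)
    (hγ : γ < t - 3 / 2) :
    ∫ k, ω k ^ γ * ‖α k‖ ≤ lpNorm (fun k ↦ ω k ^ (γ - t)) 2 volume * hsNorm t α := by
  simp only [ω_rpow_mul_norm_eq_mul γ t]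
  rw [← lpNorm_eq_hsNorm hα]
  exact integral_norm_mul_norm_le_lpNorm (memLp_ω_rpow (by linarith)) h

end MemH

/-- The norm `‖ω^{-3/2-s}‖_{L²}`, finite for `s > 0`: by Cauchy–Schwarz it controls
`∫ ω^{-3/2}|α|` in terms of `‖α‖_{h_s}`. -/
def ultravioletConst (s : ℝ) : ℝ := lpNorm (fun k ↦ ω k ^ (-(3 / 2) - s)) 2 volume

lemma ultravioletConst_nonneg (s : ℝ) : 0 ≤ ultravioletConst s := lpNorm_nonneg

lemma norm_integral_conj_mul_le (hs : 0 < s) (hα : AEStronglyMeasurable α volume) (h : MemH s α)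
    {f : ℝ³ → ℂ} {D : ℝ} (hD : 0 ≤ D) (hf : ∀ k, ‖f k‖ ≤ D * ω k ^ (-(3 / 2) : ℝ)) :
    ‖∫ k, (starRingEnd ℂ) (α k) * f k‖ ≤ D * (ultravioletConst s * hsNorm s α) := by
  have hγ : -(3 / 2) < s - 3 / 2 := by linarith
  calc ‖∫ k, (starRingEnd ℂ) (α k) * f k‖ ≤ ∫ k, D * (ω k ^ (-(3 / 2) : ℝ) * ‖α k‖) := by
        refine norm_integral_le_of_norm_le ((h.integrable_ω_rpow_mul_norm hγ).const_mul D)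
          (.of_forall fun k ↦ ?_)
        rw [norm_mul, RCLike.norm_conj, mul_comm, ← mul_assoc]
        gcongr
        exact hf k
    _ ≤ D * (ultravioletConst s * hsNorm s α) := by
        rw [integral_const_mul]
        gcongr
        exact h.integral_ω_rpow_mul_norm_le hα hγ

end WeightedSpace

section DressingField

open Real

variable {s : ℝ} {α : ℝ³ → ℂ}

lemma mα_eq_planeWaveIntegral (α : ℝ³ → ℂ) (j : Fin 3) :
    mα α j = planeWaveIntegral fun k ↦ ((k j * B0 k : ℝ) : ℂ) * α k := by
  ext x
  simp only [mα, planeWaveIntegral, mul_left_comm, mul_assoc]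

lemma divmα_eq_planeWaveIntegral (α : ℝ³ → ℂ) :
    divmα α = fun x ↦ Complex.I *
      planeWaveIntegral (fun k ↦ ((‖k‖ ^ 2 * B0 k : ℝ) : ℂ) * α k) x := by
  ext x
  simp only [divmα, planeWaveIntegral, mul_left_comm, mul_assoc]

lemma norm_apply_mul_B0_mul_le (α : ℝ³ → ℂ) (j : Fin 3) (k : ℝ³) :
    ‖((k j * B0 k : ℝ) : ℂ) * α k‖ ≤ ω k ^ (-(3 / 2) : ℝ) * ‖α k‖ := by
  rw [norm_mul, Complex.norm_real, norm_eq_abs]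
  gcongr
  exact abs_apply_mul_B0_le k j

lemma norm_norm_sq_mul_B0_mul_le (α : ℝ³ → ℂ) (k : ℝ³) :
    ‖((‖k‖ ^ 2 * B0 k : ℝ) : ℂ) * α k‖ ≤ ω k ^ (-(1 / 2) : ℝ) * ‖α k‖ := by
  rw [norm_mul, Complex.norm_real, norm_of_nonneg (mul_nonneg (by positivity) (B0_nonneg k))]
  gcongr
  exact norm_sq_mul_B0_le k

lemma integrable_apply_mul_B0_mul (hs : 0 < s) (hα : AEStronglyMeasurable α volume)
    (h : MemH s α) (j : Fin 3) : Integrable fun k ↦ ((k j * B0 k : ℝ) : ℂ) * α k := by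
  have hcont : Continuous fun k : ℝ³ ↦ ((k j * B0 k : ℝ) : ℂ) := by fun_prop
  exact (h.integrable_ω_rpow_mul_norm (by linarith)).mono' (hcont.aestronglyMeasurable.mul hα)
    (.of_forall (norm_apply_mul_B0_mul_le α j))

lemma continuous_mα (hs : 0 < s) (hα : AEStronglyMeasurable α volume) (h : MemH s α) (j : Fin 3) :
    Continuous (mα α j) := by
  rw [mα_eq_planeWaveIntegral]
  exact continuous_planeWaveIntegral (integrable_apply_mul_B0_mul hs hα h j)

lemma continuous_Fα (hs : 0 < s) (hα : AEStronglyMeasurable α volume) (h : MemH s α) (j : Fin 3) :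
    Continuous (Fα α j) :=
  continuous_const.mul (Complex.continuous_re.comp (continuous_mα hs hα h j))

lemma norm_mα_le (hs : 0 < s) (hα : AEStronglyMeasurable α volume) (h : MemH s α) (j : Fin 3)
    (x : ℝ³) : ‖mα α j x‖ ≤ ultravioletConst s * hsNorm s α := by
  have hγ : -(3 / 2) < s - 3 / 2 := by linarith
  rw [mα_eq_planeWaveIntegral]
  calc ‖planeWaveIntegral (fun k ↦ ((k j * B0 k : ℝ) : ℂ) * α k) x‖
      ≤ ∫ k, ‖((k j * B0 k : ℝ) : ℂ) * α k‖ := norm_planeWaveIntegral_le _ x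
    _ ≤ ∫ k, ω k ^ (-(3 / 2) : ℝ) * ‖α k‖ :=
        integral_mono (integrable_apply_mul_B0_mul hs hα h j).norm
          (h.integrable_ω_rpow_mul_norm hγ) (norm_apply_mul_B0_mul_le α j)
    _ ≤ ultravioletConst s * hsNorm s α := h.integral_ω_rpow_mul_norm_le hα hγ

lemma abs_Fα_le (hs : 0 < s) (hα : AEStronglyMeasurable α volume) (h : MemH s α) (j : Fin 3)
    (x : ℝ³) : |Fα α j x| ≤ 2 * (ultravioletConst s * hsNorm s α) := by
  rw [Fα, abs_mul, abs_two]
  gcongr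
  exact (Complex.abs_re_le_norm _).trans (norm_mα_le hs hα h j x)

lemma memLp_divmα_and_lpNorm_divmα_le (hs : 0 < s) (hα : AEStronglyMeasurable α volume)
    (h : MemH (1 + s) α) :
    MemLp (divmα α) 2 volume ∧ lpNorm (divmα α) 2 volume ≤ √((2 * π) ^ 3) * hsNorm s α := by
  set β : ℝ³ → ℂ := fun k ↦ ((‖k‖ ^ 2 * B0 k : ℝ) : ℂ) * α k
  have hcont : Continuous fun k : ℝ³ ↦ ((‖k‖ ^ 2 * B0 k : ℝ) : ℂ) := by fun_prop
  have hβ : AEStronglyMeasurable β volume := hcont.aestronglyMeasurable.mul hα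
  have hβ₁ : Integrable β := (h.integrable_ω_rpow_mul_norm (by linarith)).mono' hβ
    (.of_forall (norm_norm_sq_mul_B0_mul_le α))
  have hle (k : ℝ³) : ‖β k‖ ≤ 1 * ‖ω k ^ s * ‖α k‖‖ := by
    rw [one_mul, norm_ω_rpow_mul_norm]
    refine (norm_norm_sq_mul_B0_mul_le α k).trans ?_
    gcongr
    exacts [one_le_ω k, by linarith]
  have hs' : MemH s α := h.mono hα (by linarith)
  have hβ₂ : MemLp β 2 volume := MemLp.of_le_mul hs' hβ (.of_forall hle)
  obtain ⟨hmem, hnorm⟩ := memLp_planeWaveIntegral_and_lpNorm_eq hβ₁ hβ₂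
  rw [divmα_eq_planeWaveIntegral]
  refine ⟨hmem.const_mul Complex.I, ?_⟩
  calc lpNorm (fun x ↦ Complex.I * planeWaveIntegral β x) 2 volume
      ≤ 1 * lpNorm (planeWaveIntegral β) 2 volume :=
        lpNorm_le_mul_lpNorm zero_le_one hmem fun x ↦ by simp
    _ = √((2 * π) ^ 3) * lpNorm β 2 volume := by rw [one_mul, hnorm, finrank_euclideanSpace_fin]
    _ ≤ √((2 * π) ^ 3) * hsNorm s α := by
        gcongr
        rw [← lpNorm_eq_hsNorm hα, ← one_mul (lpNorm (fun k ↦ ω k ^ s * ‖α k‖) 2 volume)]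
        exact lpNorm_le_mul_lpNorm zero_le_one hs' hle

end DressingField

section EnergyShift

open Real

variable {s S : ℝ} {V : ℝ³ → ℝ} {u α : ℝ³ → ℂ}

lemma norm_fu_le (hu : IsH2 u) (k : ℝ³) :
    ‖fu u k‖ ≤ 6 * (lpNorm u 2 volume * lpNorm (fderiv ℝ u) 2 volume) *
      ω k ^ (-(3 / 2) : ℝ) := by
  refine norm_B0_mul_sum_le (fun j ↦ ?_) k
  refine (norm_integral_le_of_norm_le (hu.memLp.norm.integrable_mul hu.memLp_fderiv.norm)
    (.of_forall fun x ↦ ?_)).trans (integral_norm_mul_norm_le_lpNorm hu.memLp hu.memLp_fderiv)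
  simpa [Complex.norm_exp] using
    mul_le_mul_of_nonneg_left (norm_pd_le_norm_fderiv u j x) (norm_nonneg (u x))

lemma norm_gualpha_le (hs : 0 < s) (hα : AEStronglyMeasurable α volume) (h : MemH s α)
    (hu : MemLp u 2 volume) (k : ℝ³) :
    ‖gualpha u α k‖ ≤ 6 * (2 * (ultravioletConst s * hsNorm s α) * ∫ x, ‖u x‖ ^ 2) *
      ω k ^ (-(3 / 2) : ℝ) := by
  refine norm_B0_mul_sum_le (fun j ↦ ?_) k
  rw [← integral_const_mul]
  refine norm_integral_le_of_norm_le ((hu.integrable_norm_pow two_ne_zero).const_mul _)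
    (.of_forall fun x ↦ ?_)
  simpa [Complex.norm_exp] using
    mul_le_mul_of_nonneg_right (abs_Fα_le hs hα h j x) (sq_nonneg ‖u x‖)

/-- The Hartree potential `V ∗ |u|²`. -/
def hartree (V : ℝ³ → ℝ) (u : ℝ³ → ℂ) (x : ℝ³) : ℝ := ∫ y, V (x - y) * ‖u y‖ ^ 2

lemma aestronglyMeasurable_hartree (hV : AEStronglyMeasurable V volume)
    (hu : AEStronglyMeasurable u volume) : AEStronglyMeasurable (hartree V u) volume :=
  AEStronglyMeasurable.integral_prod_right' (f := fun p : ℝ³ × ℝ³ ↦ V (p.1 - p.2) * ‖u p.2‖ ^ 2)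
    ((hV.comp_quasiMeasurePreserving (quasiMeasurePreserving_sub volume volume)).mul
      (hu.comp_snd.norm.pow 2))

lemma abs_hartree_le (hV : MemLp V 2 volume) (hu : MemLp u 2 volume) (hS : 0 ≤ S)
    (hbound : ∀ x, ‖u x‖ ≤ S) (x : ℝ³) :
    |hartree V u x| ≤ lpNorm V 2 volume * (S * lpNorm u 2 volume) := by
  have hshift := Measure.measurePreserving_sub_left (volume : Measure ℝ³) x
  have hle (y : ℝ³) : ‖‖u y‖ ^ 2‖ ≤ S * ‖u y‖ := by
    rw [norm_pow, norm_norm, sq]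
    gcongr
    exact hbound y
  have hsq : MemLp (fun y ↦ ‖u y‖ ^ 2) 2 volume :=
    hu.of_le_mul (hu.1.norm.pow 2) (.of_forall hle)
  have hVx : lpNorm (fun y ↦ V (x - y)) 2 volume = lpNorm V 2 volume :=
    lpNorm_comp_measurePreserving hV.1 hshift
  calc |hartree V u x|
      ≤ lpNorm (fun y ↦ V (x - y)) 2 volume * lpNorm (fun y ↦ ‖u y‖ ^ 2) 2 volume :=
        norm_integral_mul_le_lpNorm (hV.comp_measurePreserving hshift) hsq
    _ ≤ lpNorm V 2 volume * (S * lpNorm u 2 volume) := by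
        rw [hVx]
        have := lpNorm_nonneg (f := V) (p := 2) (μ := volume)
        gcongr
        exact lpNorm_le_mul_lpNorm hS hu hle

lemma abs_integral_hartree_mul_le {M : ℝ} (hu : MemLp u 2 volume)
    (hM : ∀ x, |hartree V u x| ≤ M) :
    |∫ x, ∫ y, V (x - y) * ‖u y‖ ^ 2 * ‖u x‖ ^ 2| ≤ M * ∫ x, ‖u x‖ ^ 2 := by
  simp only [integral_mul_const]
  rw [← integral_const_mul, ← norm_eq_abs]
  refine norm_integral_le_of_norm_le ((hu.integrable_norm_pow two_ne_zero).const_mul M)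
    (.of_forall fun x ↦ ?_)
  rw [norm_mul, norm_pow, norm_norm]
  exact mul_le_mul_of_nonneg_right (hM x) (sq_nonneg _)

lemma abs_μshift_le {M : ℝ} (hs : 0 < s) (hα : AEStronglyMeasurable α volume) (h : MemH s α)
    (hu : IsH2 u) (hM : ∀ x, |hartree V u x| ≤ M) :
    |μshift V u α| ≤ 1 / 2 * (M * ∫ x, ‖u x‖ ^ 2) +
      6 * (lpNorm u 2 volume * lpNorm (fderiv ℝ u) 2 volume) *
        (ultravioletConst s * hsNorm s α) +
      6 * (2 * (ultravioletConst s * hsNorm s α) * ∫ x, ‖u x‖ ^ 2) *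
        (ultravioletConst s * hsNorm s α) := by
  have hΛ := mul_nonneg (ultravioletConst_nonneg s) (hsNorm_nonneg s α)
  have hnorms := mul_nonneg (lpNorm_nonneg (f := u) (p := 2) (μ := volume))
    (lpNorm_nonneg (f := fderiv ℝ u) (p := 2) (μ := volume))
  refine (abs_add_three _ _ _).trans (add_le_add_three ?_ ?_ ?_)
  · rw [abs_mul, abs_of_pos one_half_pos]
    gcongr
    exact abs_integral_hartree_mul_le hu.memLp hM
  · exact (Complex.abs_re_le_norm _).trans
      (norm_integral_conj_mul_le hs hα h (by positivity) (norm_fu_le hu))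
  · exact (Complex.abs_re_le_norm _).trans
      (norm_integral_conj_mul_le hs hα h (by positivity) (norm_gualpha_le hs hα h hu.memLp))

end EnergyShift

section Hamiltonian

open Real

variable {s : ℝ} {V : ℝ³ → ℝ} {u α : ℝ³ → ℂ}

/-- The multiplication part `F_α² + V ∗ |u|² - μ_{u,α}` of the Hamiltonian `h_{u,α}`. -/
def effectivePotential (V : ℝ³ → ℝ) (u α : ℝ³ → ℂ) (x : ℝ³) : ℝ :=
  ∑ j, Fα α j x ^ 2 + hartree V u x - μshift V u α

lemma mα_add_conj_mα (α : ℝ³ → ℂ) (j : Fin 3) (x : ℝ³) :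
    mα α j x + (starRingEnd ℂ) (mα α j x) = ((Fα α j x : ℝ) : ℂ) :=
  Complex.add_conj _

lemma hMF_eq (V : ℝ³ → ℝ) (u α : ℝ³ → ℂ) (x : ℝ³) :
    hMF V u α x = -(∑ j, pd2 u j j x) - 2 * Complex.I * (u x * divmα α x) -
      2 * Complex.I * ∑ j, ((Fα α j x : ℝ) : ℂ) * pd u j x +
      ((effectivePotential V u α x : ℝ) : ℂ) * u x := by
  simp only [hMF, effectivePotential, hartree, ← mα_add_conj_mα, add_mul, Finset.sum_add_distrib]
  push_cast
  ring

lemma aestronglyMeasurable_effectivePotential (hs : 0 < s) (hα : AEStronglyMeasurable α volume)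
    (h : MemH s α) (hV : AEStronglyMeasurable V volume) (hu : AEStronglyMeasurable u volume) :
    AEStronglyMeasurable (effectivePotential V u α) volume := by
  have hF : Continuous fun x ↦ ∑ j, Fα α j x ^ 2 :=
    continuous_finsetSum _ fun j _ ↦ (continuous_Fα hs hα h j).pow 2
  exact (hF.aestronglyMeasurable.add (aestronglyMeasurable_hartree hV hu)).sub
    aestronglyMeasurable_const

lemma abs_effectivePotential_le (hs : 0 < s) (hα : AEStronglyMeasurable α volume) (h : MemH s α)
    (hV : MemLp V 2 volume) (hu : IsH2 u) (hnorm : ∫ x, ‖u x‖ ^ 2 = 1) (x : ℝ³) :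
    |effectivePotential V u α x| ≤ 24 * (ultravioletConst s * hsNorm s α) ^ 2 +
      6 * H2norm u * (ultravioletConst s * hsNorm s α) +
      3 / 2 * (lpNorm V 2 volume * (sobolevConst * H2norm u)) := by
  set Λ := ultravioletConst s * hsNorm s α
  have hΛ : 0 ≤ Λ := mul_nonneg (ultravioletConst_nonneg s) (hsNorm_nonneg s α)
  have hF : |∑ j, Fα α j x ^ 2| ≤ 3 * (2 * Λ) ^ 2 := by
    rw [abs_of_nonneg (by positivity)]
    simpa using Finset.sum_le_card_nsmul Finset.univ _ _ fun j _ ↦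
      sq_le_sq.2 ((abs_Fα_le hs hα h j x).trans (le_abs_self _))
  have hhartree := abs_hartree_le hV hu.memLp
    (mul_nonneg sobolevConst_nonneg (H2norm_nonneg u)) hu.norm_apply_le
  have hμ := abs_μshift_le hs hα h hu hhartree
  simp only [lpNorm_two_eq_one hu.memLp.1 hnorm, hnorm, mul_one, one_mul] at hhartree hμ
  calc |effectivePotential V u α x|
      ≤ |∑ j, Fα α j x ^ 2| + |hartree V u x| + |μshift V u α| :=
        (abs_sub _ _).trans (add_le_add_left (abs_add_le _ _) _)
    _ ≤ 3 * (2 * Λ) ^ 2 + lpNorm V 2 volume * (sobolevConst * H2norm u) +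
          (1 / 2 * (lpNorm V 2 volume * (sobolevConst * H2norm u)) + 6 * H2norm u * Λ +
            6 * (2 * Λ) * Λ) := by
        refine add_le_add_three hF (hhartree x) (hμ.trans ?_)
        gcongr
        exact hu.lpNorm_fderiv_le_H2norm
    _ = _ := by ring

lemma memLp_effectivePotential_mul_and_lpNorm_le (hs : 0 < s) (hα : AEStronglyMeasurable α volume)
    (h : MemH s α) (hV : MemLp V 2 volume) (hu : IsH2 u) (hnorm : ∫ x, ‖u x‖ ^ 2 = 1) :
    MemLp (fun x ↦ ((effectivePotential V u α x : ℝ) : ℂ) * u x) 2 volume ∧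
    lpNorm (fun x ↦ ((effectivePotential V u α x : ℝ) : ℂ) * u x) 2 volume ≤
      24 * (ultravioletConst s * hsNorm s α) ^ 2 +
        6 * H2norm u * (ultravioletConst s * hsNorm s α) +
        3 / 2 * (lpNorm V 2 volume * (sobolevConst * H2norm u)) := by
  have hW := abs_effectivePotential_le hs hα h hV hu hnorm
  have hmeas := aestronglyMeasurable_effectivePotential hs hα h hV.1 hu.memLp.1
  simpa only [lpNorm_two_eq_one hu.memLp.1 hnorm, mul_one] using
    memLp_mul_and_lpNorm_mul_le ((abs_nonneg _).trans (hW 0))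
      (Complex.continuous_ofReal.comp_aestronglyMeasurable hmeas)
      (fun x ↦ (Complex.norm_real _).trans_le (hW x)) hu.memLp

lemma memLp_mul_divmα_and_lpNorm_le (hs : 0 < s) (hα : AEStronglyMeasurable α volume)
    (h : MemH (1 + s) α) (hu : IsH2 u) :
    MemLp (fun x ↦ u x * divmα α x) 2 volume ∧
    lpNorm (fun x ↦ u x * divmα α x) 2 volume ≤
      sobolevConst * H2norm u * (√((2 * π) ^ 3) * hsNorm s α) := by
  have hS : 0 ≤ sobolevConst * H2norm u := mul_nonneg sobolevConst_nonneg (H2norm_nonneg u)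
  obtain ⟨hdiv, hdiv_le⟩ := memLp_divmα_and_lpNorm_divmα_le hs hα h
  obtain ⟨hmem, hle⟩ := memLp_mul_and_lpNorm_mul_le hS hu.memLp.1 hu.norm_apply_le hdiv
  exact ⟨hmem, hle.trans (by gcongr)⟩

lemma memLp_sum_Fα_mul_pd_and_lpNorm_le (hs : 0 < s) (hα : AEStronglyMeasurable α volume)
    (h : MemH s α) (hu : MemLp (fderiv ℝ u) 2 volume) :
    MemLp (fun x ↦ ∑ j, ((Fα α j x : ℝ) : ℂ) * pd u j x) 2 volume ∧
    lpNorm (fun x ↦ ∑ j, ((Fα α j x : ℝ) : ℂ) * pd u j x) 2 volume ≤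
      6 * (ultravioletConst s * hsNorm s α) * lpNorm (fderiv ℝ u) 2 volume := by
  set Λ := ultravioletConst s * hsNorm s α
  have hΛ : 0 ≤ Λ := mul_nonneg (ultravioletConst_nonneg s) (hsNorm_nonneg s α)
  have hle (x : ℝ³) : ‖∑ j, ((Fα α j x : ℝ) : ℂ) * pd u j x‖ ≤ 6 * Λ * ‖fderiv ℝ u x‖ :=
    calc ‖∑ j, ((Fα α j x : ℝ) : ℂ) * pd u j x‖ ≤ ∑ _j : Fin 3, 2 * Λ * ‖fderiv ℝ u x‖ := by
          refine norm_sum_le_of_le _ fun j _ ↦ ?_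
          rw [norm_mul, Complex.norm_real]
          gcongr
          exacts [abs_Fα_le hs hα h j x, norm_pd_le_norm_fderiv u j x]
      _ = 6 * Λ * ‖fderiv ℝ u x‖ := by
          rw [Fin.sum_const, nsmul_eq_mul]
          push_cast
          ring
  have hmeas : AEStronglyMeasurable (fun x ↦ ∑ j, ((Fα α j x : ℝ) : ℂ) * pd u j x) volume :=
    Finset.aestronglyMeasurable_fun_sum _ fun j _ ↦
      (Complex.continuous_ofReal.comp (continuous_Fα hs hα h j)).aestronglyMeasurable.mul
        (memLp_pd hu j).1
  exact ⟨hu.of_le_mul hmeas (.of_forall hle), lpNorm_le_mul_lpNorm (by positivity) hu hle⟩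

lemma memLp_hMF_and_lpNorm_hMF_le (hs : 0 < s) (hα : AEStronglyMeasurable α volume)
    (h : MemH (1 + s) α) (hV : MemLp V 2 volume) (hu : IsH2 u) (hnorm : ∫ x, ‖u x‖ ^ 2 = 1) :
    MemLp (hMF V u α) 2 volume ∧ lpNorm (hMF V u α) 2 volume ≤ 3 * H2norm u +
      2 * (sobolevConst * H2norm u * (√((2 * π) ^ 3) * hsNorm s α)) +
      2 * (6 * (ultravioletConst s * hsNorm s α) * H2norm u) +
      (24 * (ultravioletConst s * hsNorm s α) ^ 2 +
        6 * H2norm u * (ultravioletConst s * hsNorm s α) +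
        3 / 2 * (lpNorm V 2 volume * (sobolevConst * H2norm u))) := by
  have hs' : MemH s α := h.mono hα (by linarith)
  have hΛ := mul_nonneg (ultravioletConst_nonneg s) (hsNorm_nonneg s α)
  have htwoI (f : ℝ³ → ℂ) :
      lpNorm (fun x ↦ 2 * Complex.I * f x) 2 volume = 2 * lpNorm f 2 volume :=
    (lpNorm_const_smul (2 * Complex.I) f volume).trans (by simp)
  obtain ⟨hdiv, hdiv_le⟩ := memLp_mul_divmα_and_lpNorm_le hs hα h hu
  obtain ⟨hgrad, hgrad_le⟩ := memLp_sum_Fα_mul_pd_and_lpNorm_le hs hα hs' hu.memLp_fderiv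
  obtain ⟨hpot, hpot_le⟩ := memLp_effectivePotential_mul_and_lpNorm_le hs hα hs' hV hu hnorm
  have hlap := hu.memLp_sum_pd2.neg
  have hlap_div := hlap.sub (hdiv.const_mul (2 * Complex.I))
  have hlap_div_grad := hlap_div.sub (hgrad.const_mul (2 * Complex.I))
  rw [funext (hMF_eq V u α)]
  refine ⟨hlap_div_grad.add hpot, ?_⟩
  refine (lpNorm_add_le hlap_div_grad one_le_two).trans (add_le_add ?_ hpot_le)
  refine (lpNorm_sub_le hlap_div one_le_two).trans (add_le_add ?_ ?_)
  · refine (lpNorm_sub_le hlap one_le_two).trans (add_le_add ?_ ?_)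
    · exact (lpNorm_neg _ _ _).trans_le hu.lpNorm_sum_pd2_le
    · rw [htwoI]
      gcongr
  · rw [htwoI]
    gcongr
    exact hgrad_le.trans (by gcongr; exact hu.lpNorm_fderiv_le_H2norm)

end Hamiltonian

section Bound

open Real

variable {s : ℝ} {V : ℝ³ → ℝ} {u α : ℝ³ → ℂ}

/-- The constant, depending only on `s`, of the bound on `h_{u,α}u` in which the pair potential
enters through its `L²` norm. -/
def hMFConst (s : ℝ) : ℝ :=
  3 + 2 * (sobolevConst * √((2 * π) ^ 3)) + 18 * ultravioletConst s +
    24 * ultravioletConst s ^ 2 + 3 / 2 * sobolevConst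

lemma hMFConst_pos (s : ℝ) : 0 < hMFConst s := by
  have := sobolevConst_nonneg
  have := ultravioletConst_nonneg s
  unfold hMFConst
  positivity

lemma sum_monomials_le {N v a c K U : ℝ} (hN : 1 ≤ N) (hv : 0 ≤ v) (hc : 0 ≤ c) (hK : 0 ≤ K)
    (hU : 0 ≤ U) :
    3 * N + 2 * (K * N * (c * a)) + 2 * (6 * (U * a) * N) +
        (24 * (U * a) ^ 2 + 6 * N * (U * a) + 3 / 2 * (v * (K * N))) ≤
      (3 + 2 * (K * c) + 18 * U + 24 * U ^ 2 + 3 / 2 * K) * (1 + v) * N * (1 + a ^ 2) := by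
  set P := (1 + v) * (1 + a ^ 2) with hP
  have hvP : 1 + v ≤ P := le_mul_of_one_le_right (by positivity) (by nlinarith)
  have haP : 1 + a ^ 2 ≤ P := le_mul_of_one_le_left (by positivity) (by linarith)
  have ha : a ≤ 1 + a ^ 2 := by nlinarith
  calc _ = N * (3 * 1 + (2 * (K * c) + 18 * U) * a + 3 / 2 * K * v) +
          1 * (24 * U ^ 2 * a ^ 2) := by ring
    _ ≤ N * (3 * P + (2 * (K * c) + 18 * U) * P + 3 / 2 * K * P) + N * (24 * U ^ 2 * P) := by
        gcongr <;> linarith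
    _ = _ := by rw [hP]; ring

lemma lpNorm_pairPotential_eq (hV : MemLp V 2 volume)
    (h : ∀ φ : SchwartzMap ℝ³ ℂ,
      ∫ x, ((V x : ℝ) : ℂ) * ∫ k, Complex.exp (-(Complex.I * ((inner ℝ k x : ℝ) : ℂ))) * φ k =
        ∫ k, ((vker k : ℝ) : ℂ) * φ k) :
    lpNorm V 2 volume = (√((2 * π) ^ 3))⁻¹ * lpNorm vker 2 volume := by
  rw [eq_inv_mul_iff_mul_eq₀ (by positivity), eq_comm]
  have hw : Continuous fun k ↦ ((vker k : ℝ) : ℂ) :=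
    Complex.continuous_ofReal.comp continuous_vker
  have hVℂ : MemLp (fun x ↦ ((V x : ℝ) : ℂ)) 2 volume := hV.ofReal
  have hnorm := lpNorm_eq_of_integral_mul_fourier_eq hVℂ hw.locallyIntegrable h
  rw [finrank_euclideanSpace_fin, ← lpNorm_norm hVℂ.1, ← lpNorm_norm hw.aestronglyMeasurable]
    at hnorm
  simpa only [Complex.norm_real, lpNorm_norm hV.1,
    lpNorm_norm continuous_vker.aestronglyMeasurable] using hnorm

theorem hMF_bound_general (s : ℝ) (hs : 0 < s) :
    ∃ C > 0, ∀ V : ℝ³ → ℝ, MemLp V 2 volume → ∀ u α : ℝ³ → ℂ, IsH2 u → (∫ x, ‖u x‖ ^ 2) = 1 →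
      AEStronglyMeasurable α volume → MemH (1 + s) α →
        MemLp (hMF V u α) 2 volume ∧
        eLpNorm (hMF V u α) 2 volume ≤
          ENNReal.ofReal (C * (1 + lpNorm V 2 volume) * H2norm u * (1 + hsNorm s α ^ 2)) := by
  refine ⟨hMFConst s, hMFConst_pos s, fun V hV u α hu hnorm hα h ↦ ?_⟩
  obtain ⟨hmem, hle⟩ := memLp_hMF_and_lpNorm_hMF_le hs hα h hV hu hnorm
  have hN : 1 ≤ H2norm u :=
    (lpNorm_two_eq_one hu.memLp.1 hnorm).symm.trans_le hu.lpNorm_le_H2norm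
  refine ⟨hmem, ?_⟩
  rw [← ofReal_lpNorm hmem]
  exact ENNReal.ofReal_le_ofReal (hle.trans (sum_monomials_le hN lpNorm_nonneg (sqrt_nonneg _)
    sobolevConst_nonneg (ultravioletConst_nonneg s)))

end Bound

/-- For every `s > 0` there is `C > 0` such that, with `V` the effective pair potential,
for every twice differentiable `u` with `u, ∂_j u, ∂_i∂_j u ∈ L²`, `‖u‖_{L²} = 1`, and every
`α` with `‖α‖_{h_{1+s}} < ∞`: `h_{u,α}u ∈ L²` and
`‖h_{u,α}u‖_{L²} ≤ C(‖u‖_{H²} + ‖u‖_{H¹}²)(1 + ‖α‖_{h_s}²)`. -/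
theorem hMF_bound (s : ℝ) (hs : 0 < s) :
    ∃ C > 0, ∀ V : EuclideanSpace ℝ (Fin 3) → ℝ, MemLp V 2 volume →
      (∀ φ : SchwartzMap (EuclideanSpace ℝ (Fin 3)) ℂ,
        (∫ x, ((V x : ℝ) : ℂ) *
            ∫ k, Complex.exp (-(Complex.I * ((inner ℝ k x : ℝ) : ℂ))) * φ k) =
          ∫ k, ((vker k : ℝ) : ℂ) * φ k) →
      ∀ (u α : EuclideanSpace ℝ (Fin 3) → ℂ),
        Differentiable ℝ u →
        (∀ j : Fin 3, Differentiable ℝ (fun x => pd u j x)) →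
        MemLp u 2 volume →
        MemLp (fun x => fderiv ℝ u x) 2 volume →
        (∀ i j : Fin 3, MemLp (fun x => pd2 u i j x) 2 volume) →
        (∫ x, ‖u x‖ ^ 2) = 1 →
        Measurable α →
        (∫⁻ k, ENNReal.ofReal (ω k ^ (2 * (1 + s)) * ‖α k‖ ^ 2) < ⊤) →
        MemLp (hMF V u α) 2 volume ∧
        eLpNorm (hMF V u α) 2 volume ≤
          ENNReal.ofReal (C * (H2norm u + H1norm u ^ 2) * (1 + hsNorm s α ^ 2)) := by
  obtain ⟨C, hC, hbound⟩ := hMF_bound_general s hs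
  refine ⟨C * (1 + (√((2 * Real.pi) ^ 3))⁻¹ * lpNorm vker 2 volume), ?_, ?_⟩
  · have := lpNorm_nonneg (f := vker) (p := 2) (μ := volume)
    positivity
  intro V hV hVker u α hu hpd hu_mem hfderiv_mem hpd2_mem hnorm hα hα_fin
  obtain ⟨hmem, hle⟩ := hbound V hV u α ⟨hu, hpd, hu_mem, hfderiv_mem, hpd2_mem⟩ hnorm
    hα.aestronglyMeasurable (memH_of_lintegral_lt_top hα.aestronglyMeasurable hα_fin)
  rw [← lpNorm_pairPotential_eq hV hVker]
  have hv := lpNorm_nonneg (f := V) (p := 2) (μ := volume)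
  refine ⟨hmem, hle.trans (ENNReal.ofReal_le_ofReal ?_)⟩
  gcongr
  exact le_add_of_nonneg_right (sq_nonneg _)

end
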